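/- Suppose d, n ∈ ℕ are such that 3 ≤ d ≤ n/4 and S ⊆ V satisfies |S| ≤ n/6. Let H be a graph with vertex set S and let F be a bipartite graph with vertex partition (S, V∖S) such that Δ(F ∪ H) ≤ d. Let v ∈ V∖S. Then the conditional expectation, with respect to the uniform distribution on 𝒢_{n,d}, of d_{G,S}(v) − d_F(v) given that G_{n,d}[S] = H and F ⊆ G_{n,d} is at most 6d|S|/n. Equivalently, Σ_{G} (d_{G,S}(v) − d_F(v)) ≤ (6d|S|/n) · |{G ∈ 𝒢_{n,d} : G[S] = H, F ⊆ G}|, where the sum is over all G ∈ 𝒢_{n,d} with G[S] = H and F ⊆ G. -/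

import Mathlib

open scoped Classical BigOperators

noncomputable section

/-!
The proof is by switching. Given an edge `vs` of `G` outside `F` with `s ∈ S`, and an edge `xy`
outside `S` with `vx` and `sy` non-edges, replace `vs`, `xy` by `vx`, `sy`. This keeps `G` regular,
keeps `G[S]`, and does not touch `F`. For given `G` and `s`, all but at most `2 (|S| + d) d` of the
`n d` ordered edges `xy` are eligible. Conversely, a switching is determined by its outcome `G'`
together with `s ∈ S`, a `G'`-neighbour `x` of `v` and a `G'`-neighbour `y` of `s`, so at most
`|S| d²` switchings lead to any given `G'`. Double counting gives the bound.
-/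

section Switching

open Finset SimpleGraph

variable {V : Type*} {G F H : SimpleGraph V} {v s x y : V}

/-- The four vertices span an alternating 4-cycle `v s y x` of `G`: the pairs `vs` and `xy` are
edges, while `vx` and `sy` are pairs of distinct non-adjacent vertices. -/
structure IsAlternating (G : SimpleGraph V) (v s x y : V) : Prop where
  adj_left : G.Adj v s
  adj_right : G.Adj x y
  not_adj_fst : ¬G.Adj v x
  not_adj_snd : ¬G.Adj s y
  ne_fst : v ≠ x
  ne_snd : s ≠ y

/-- The switching of `G` along the 4-cycle `v s y x`. Taking a symmetric difference makes it
an involution; it replaces the edges `vs`, `xy` by `vx`, `sy` when the cycle is alternating. -/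
def switch (G : SimpleGraph V) (v s x y : V) : SimpleGraph V :=
  symmDiff G (fromEdgeSet {s(v, s), s(x, y), s(v, x), s(s, y)})

lemma switch_injective (v s x y : V) :
    Function.Injective fun G : SimpleGraph V ↦ switch G v s x y :=
  symmDiff_left_injective _

lemma switch_comm_edges (G : SimpleGraph V) (v s x y : V) :
    switch G v s x y = switch G x y v s := by
  unfold switch
  congr 2
  ext e
  simp only [Set.mem_insert_iff, Set.mem_singleton_iff, Sym2.eq_swap (a := x) (b := v),
    Sym2.eq_swap (a := y) (b := s)]
  tauto

lemma switch_comm_ends (G : SimpleGraph V) (v s x y : V) :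
    switch G v s x y = switch G s v y x := by
  unfold switch
  congr 2
  ext e
  simp only [Set.mem_insert_iff, Set.mem_singleton_iff, Sym2.eq_swap (a := s) (b := v),
    Sym2.eq_swap (a := y) (b := x)]
  tauto

namespace IsAlternating

lemma comm_edges (h : IsAlternating G v s x y) : IsAlternating G x y v s :=
  ⟨h.adj_right, h.adj_left, fun e ↦ h.not_adj_fst e.symm, fun e ↦ h.not_adj_snd e.symm,
    h.ne_fst.symm, h.ne_snd.symm⟩

lemma comm_ends (h : IsAlternating G v s x y) : IsAlternating G s v y x :=
  ⟨h.adj_left.symm, h.adj_right.symm, h.not_adj_snd, h.not_adj_fst, h.ne_snd, h.ne_fst⟩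

lemma switch_adj_iff (h : IsAlternating G v s x y) {a b : V} :
    (switch G v s x y).Adj a b ↔
      (G.Adj a b ∧ s(a, b) ≠ s(v, s) ∧ s(a, b) ≠ s(x, y)) ∨
        s(a, b) = s(v, x) ∨ s(a, b) = s(s, y) := by
  obtain ⟨hvs, hxy, hvx, hsy, hvx', hsy'⟩ := h
  simp only [switch, symmDiff, sup_adj, sdiff_adj, fromEdgeSet_adj, Set.mem_insert_iff,
    Set.mem_singleton_iff, ne_eq, Sym2.eq_iff]
  grind [G.adj_comm, G.ne_of_adj]

lemma switch_adj_fst (h : IsAlternating G v s x y) : (switch G v s x y).Adj v x :=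
  h.switch_adj_iff.2 (.inr (.inl rfl))

lemma switch_adj_snd (h : IsAlternating G v s x y) : (switch G v s x y).Adj s y :=
  h.switch_adj_iff.2 (.inr (.inr rfl))

variable [Fintype V]

lemma neighborFinset_switch_left [DecidableEq V] (h : IsAlternating G v s x y) :
    (switch G v s x y).neighborFinset v = insert x ((G.neighborFinset v).erase s) := by
  ext b
  obtain ⟨hvs, hxy, hvx, -, hvx', -⟩ := id h
  simp only [mem_neighborFinset, h.switch_adj_iff, mem_insert, mem_erase, ne_eq, Sym2.eq_iff]
  grind [G.adj_comm, G.ne_of_adj]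

lemma degree_switch_left (h : IsAlternating G v s x y) :
    (switch G v s x y).degree v = G.degree v := by
  have hx : x ∉ (G.neighborFinset v).erase s := by simp [h.not_adj_fst]
  have hs : s ∈ G.neighborFinset v := by simpa using h.adj_left
  rw [← card_neighborFinset_eq_degree, h.neighborFinset_switch_left, card_insert_of_notMem hx,
    card_erase_add_one hs, card_neighborFinset_eq_degree]

lemma neighborFinset_switch_of_ne (h : IsAlternating G v s x y) {w : V} (hwv : w ≠ v)
    (hws : w ≠ s) (hwx : w ≠ x) (hwy : w ≠ y) :
    (switch G v s x y).neighborFinset w = G.neighborFinset w := by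
  ext b
  simp [h.switch_adj_iff, hwv, hws, hwx, hwy]

lemma degree_switch (h : IsAlternating G v s x y) (w : V) :
    (switch G v s x y).degree w = G.degree w := by
  by_cases hwv : w = v
  · exact hwv ▸ h.degree_switch_left
  by_cases hws : w = s
  · rw [hws, switch_comm_ends]
    exact h.comm_ends.degree_switch_left
  by_cases hwx : w = x
  · rw [hwx, switch_comm_edges]
    exact h.comm_edges.degree_switch_left
  by_cases hwy : w = y
  · rw [hwy, switch_comm_edges, switch_comm_ends]
    exact h.comm_edges.comm_ends.degree_switch_left
  · rw [← card_neighborFinset_eq_degree, h.neighborFinset_switch_of_ne hwv hws hwx hwy,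
      card_neighborFinset_eq_degree]

end IsAlternating

variable [Fintype V]

lemma card_interedges_univ_right (G : SimpleGraph V) (A : Finset V) :
    #(G.interedges A univ) = ∑ a ∈ A, G.degree a := by
  simp only [interedges, Rel.interedges, card_filter, sum_product, ← card_neighborFinset_eq_degree,
    neighborFinset_eq_filter]

variable [DecidableEq V] {S : Finset V} {d : ℕ}

lemma card_mul_le_card_interedges_compl_add (hG : G.IsRegularOfDegree d) (A B : Finset V) :
    Fintype.card V * d ≤ #(G.interedges Aᶜ Bᶜ) + (#A + #B) * d := by
  have hcover : G.interedges univ univ ⊆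
      G.interedges Aᶜ Bᶜ ∪ (G.interedges A univ ∪ G.interedges univ B) := by
    intro e he
    simp only [mem_union, mem_interedges_iff, mem_compl, mem_univ, true_and] at he ⊢
    tauto
  have hcard (T : Finset V) : #(G.interedges T univ) = #T * d := by
    simp [card_interedges_univ_right, hG.degree_eq]
  have hcomm : #(G.interedges univ B) = #(G.interedges B univ) :=
    have := G.symm
    Rel.card_interedges_comm univ B
  calc Fintype.card V * d = #(G.interedges univ univ) := by rw [hcard, card_univ]
    _ ≤ #(G.interedges Aᶜ Bᶜ) + (#(G.interedges A univ) + #(G.interedges univ B)) :=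
      (card_le_card hcover).trans <| (card_union_le _ _).trans <|
        Nat.add_le_add_left (card_union_le _ _) _
    _ = #(G.interedges Aᶜ Bᶜ) + (#A + #B) * d := by
      rw [hcomm, hcard, hcard, add_mul]

/-- The paper's conditioned space: the `d`-regular graphs `G` with `G[S] = H[S]` and
`F ⊆ G`. -/
def regularExtensions (d : ℕ) (S : Finset V) (H F : SimpleGraph V) : Finset (SimpleGraph V) :=
  univ.filter fun G ↦ (∀ w, G.degree w = d) ∧
    (∀ a b : V, a ∈ S → b ∈ S → (G.Adj a b ↔ H.Adj a b)) ∧ F ≤ G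

lemma mem_regularExtensions : G ∈ regularExtensions d S H F ↔
    G.IsRegularOfDegree d ∧ (∀ a b : V, a ∈ S → b ∈ S → (G.Adj a b ↔ H.Adj a b)) ∧ F ≤ G := by
  simp only [regularExtensions, mem_filter, mem_univ, true_and, IsRegularOfDegree]

lemma IsAlternating.switch_mem_regularExtensions (h : IsAlternating G v s x y)
    (hF : F.IsVertexCover S) (hvs : ¬F.Adj v s) (hv : v ∉ S) (hx : x ∉ S) (hy : y ∉ S)
    (hG : G ∈ regularExtensions d S H F) :
    switch G v s x y ∈ regularExtensions d S H F := by
  obtain ⟨hreg, hind, hFG⟩ := mem_regularExtensions.1 hG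
  refine mem_regularExtensions.2 ⟨fun w ↦ ?_, fun a b ha hb ↦ ?_, fun a b hab ↦ ?_⟩
  · rw [h.degree_switch, hreg.degree_eq]
  · rw [← hind a b ha hb, h.switch_adj_iff]
    simp only [ne_eq, Sym2.eq_iff]
    grind
  · have hxy : ¬F.Adj x y := fun e ↦ (hF e).elim hx hy
    refine h.switch_adj_iff.2 (.inl ⟨hFG hab, fun e ↦ hvs ?_, fun e ↦ hxy ?_⟩)
    · rwa [← mem_edgeSet, ← e]
    · rwa [← mem_edgeSet, ← e]

/-- The neighbours of `v` in `S` that are joined to `v` by an edge of `G` outside `F`; there are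
`d_{G,S}(v) - d_F(v)` of them. -/
def unexposedNeighbors (G F : SimpleGraph V) (S : Finset V) (v : V) : Finset V :=
  (G.neighborFinset v ∩ S) \ F.neighborFinset v

lemma mem_unexposedNeighbors :
    s ∈ unexposedNeighbors G F S v ↔ G.Adj v s ∧ s ∈ S ∧ ¬F.Adj v s := by
  simp only [unexposedNeighbors, mem_sdiff, mem_inter, mem_neighborFinset, and_assoc]

lemma cast_card_unexposedNeighbors (hF : F.IsVertexCover S) (hFG : F ≤ G) (hv : v ∉ S) :
    (#(unexposedNeighbors G F S v) : ℝ) = #(G.neighborFinset v ∩ S) - F.degree v := by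
  have hsub : F.neighborFinset v ⊆ G.neighborFinset v ∩ S := fun b hb ↦ by
    rw [mem_neighborFinset] at hb
    exact mem_inter.2 ⟨(mem_neighborFinset ..).2 (hFG hb), (hF hb).resolve_left hv⟩
  rw [unexposedNeighbors, cast_card_sdiff hsub, card_neighborFinset_eq_degree]

/-- The triples `(s, x, y)` for which switching `vs`, `xy` to `vx`, `sy` in `G` is admissible. -/
def switchTriples (G F : SimpleGraph V) (S : Finset V) (v : V) : Finset (Σ _ : V, V × V) :=
  (unexposedNeighbors G F S v).sigma fun s ↦
    G.interedges (S ∪ insert v (G.neighborFinset v))ᶜ (S ∪ G.neighborFinset s)ᶜ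

lemma mem_switchTriples : ⟨s, x, y⟩ ∈ switchTriples G F S v ↔
    IsAlternating G v s x y ∧ s ∈ S ∧ x ∉ S ∧ y ∉ S ∧ ¬F.Adj v s := by
  simp only [switchTriples, mem_sigma, mem_unexposedNeighbors, mem_interedges_iff, mem_compl,
    mem_union, mem_insert, mem_neighborFinset]
  constructor
  · rintro ⟨⟨hvs, hs, hFvs⟩, hx, hy, hxy⟩
    exact ⟨⟨hvs, hxy, by tauto, by tauto, by grind, by grind⟩, hs, by tauto, by tauto, hFvs⟩
  · rintro ⟨⟨hvs, hxy, hvx, hsy, hne, -⟩, hs, hx, hy, hFvs⟩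
    exact ⟨⟨hvs, hs, hFvs⟩, by grind, by tauto, hxy⟩

lemma card_union_insert_neighborFinset_le (hs : s ∈ S) (hvs : G.Adj v s) :
    #(S ∪ insert v (G.neighborFinset v)) ≤ #S + G.degree v := by
  have hinter : 0 < #(S ∩ insert v (G.neighborFinset v)) :=
    card_pos.2 ⟨s, mem_inter.2 ⟨hs, mem_insert_of_mem (by simpa using hvs)⟩⟩
  have hinsert := card_insert_le v (G.neighborFinset v)
  have hadd := card_union_add_card_inter S (insert v (G.neighborFinset v))
  rw [card_neighborFinset_eq_degree] at hinsert
  omega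

lemma card_unexposedNeighbors_mul_le (hG : G.IsRegularOfDegree d) :
    #(unexposedNeighbors G F S v) * (Fintype.card V * d) ≤
      #(switchTriples G F S v) + #(unexposedNeighbors G F S v) * (2 * (#S + d) * d) := by
  rw [switchTriples, card_sigma, ← sum_const_nat fun _ _ ↦ rfl, ← sum_const_nat fun _ _ ↦ rfl,
    ← sum_add_distrib]
  refine sum_le_sum fun s hs ↦ ?_
  obtain ⟨hvs, hsS, -⟩ := mem_unexposedNeighbors.1 hs
  have hleft := card_union_insert_neighborFinset_le hsS hvs
  have hright := card_union_le S (G.neighborFinset s)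
  rw [hG.degree_eq] at hleft
  rw [card_neighborFinset_eq_degree, hG.degree_eq] at hright
  refine (card_mul_le_card_interedges_compl_add hG
    (S ∪ insert v (G.neighborFinset v)) (S ∪ G.neighborFinset s)).trans ?_
  gcongr
  omega

lemma sum_card_switchTriples_le (hF : F.IsVertexCover S) (hv : v ∉ S) :
    ∑ G ∈ regularExtensions d S H F, #(switchTriples G F S v) ≤
      #(regularExtensions d S H F) * (#S * (d * d)) := by
  let outcomes (G : SimpleGraph V) : Finset (Σ _ : V, V × V) :=
    S.sigma fun s ↦ G.neighborFinset v ×ˢ G.neighborFinset s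
  have houtcomes : ∀ G ∈ regularExtensions d S H F, #(outcomes G) = #S * (d * d) :=
    fun G hG ↦ by simp [outcomes, (mem_regularExtensions.1 hG).1.degree_eq]
  rw [← smul_eq_mul, ← sum_const, ← sum_congr rfl houtcomes, ← card_sigma, ← card_sigma]
  refine card_le_card_of_injOn (fun t ↦ ⟨switch t.1 v t.2.1 t.2.2.1 t.2.2.2, t.2⟩) ?_ ?_
  · rintro ⟨G, s, x, y⟩ ht
    obtain ⟨hG, ht⟩ := mem_sigma.1 ht
    obtain ⟨halt, hs, hx, hy, hFvs⟩ := mem_switchTriples.1 ht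
    refine mem_sigma.2 ⟨halt.switch_mem_regularExtensions hF hFvs hv hx hy hG, ?_⟩
    simp only [outcomes, mem_sigma, mem_product, mem_neighborFinset]
    exact ⟨hs, halt.switch_adj_fst, halt.switch_adj_snd⟩
  · rintro ⟨G, t⟩ - ⟨G', t'⟩ - h
    obtain ⟨hswitch, rfl⟩ :
        switch G v t.1 t.2.1 t.2.2 = switch G' v t'.1 t'.2.1 t'.2.2 ∧ t = t' := by
      simpa only [Sigma.mk.injEq, heq_eq_eq] using h
    rw [switch_injective _ _ _ _ hswitch]

lemma sum_card_unexposedNeighbors_mul_le (hF : F.IsVertexCover S) (hv : v ∉ S) :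
    (∑ G ∈ regularExtensions d S H F, #(unexposedNeighbors G F S v)) * Fintype.card V ≤
      #(regularExtensions d S H F) * (#S * d) +
        (∑ G ∈ regularExtensions d S H F, #(unexposedNeighbors G F S v)) * (2 * (#S + d)) := by
  set Q := regularExtensions d S H F
  obtain rfl | hd := d.eq_zero_or_pos
  · have hempty : ∀ G ∈ Q, #(unexposedNeighbors G F S v) = 0 := fun G hG ↦ by
      have hdeg := (mem_regularExtensions.1 hG).1.degree_eq v
      exact Nat.eq_zero_of_le_zero <| hdeg ▸ card_le_card (sdiff_subset.trans inter_subset_left)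
    simp [sum_eq_zero hempty]
  refine Nat.le_of_mul_le_mul_right ?_ hd
  calc (∑ G ∈ Q, #(unexposedNeighbors G F S v)) * Fintype.card V * d
      ≤ ∑ G ∈ Q, (#(switchTriples G F S v) +
          #(unexposedNeighbors G F S v) * (2 * (#S + d) * d)) := by
        rw [mul_assoc, sum_mul]
        exact sum_le_sum fun G hG ↦
          card_unexposedNeighbors_mul_le (mem_regularExtensions.1 hG).1
    _ ≤ #Q * (#S * (d * d)) +
          (∑ G ∈ Q, #(unexposedNeighbors G F S v)) * (2 * (#S + d) * d) := by
        rw [sum_add_distrib, ← sum_mul]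
        exact Nat.add_le_add_right (sum_card_switchTriples_le hF hv) _
    _ = _ := by ring

theorem statement_6_general (d : ℕ) (S : Finset V) (H F : SimpleGraph V) (hF : F.IsVertexCover S)
    (v : V) (hv : v ∉ S) (hcard : 12 * (#S + d) ≤ 5 * Fintype.card V) :
    ∑ G ∈ regularExtensions d S H F, ((#(G.neighborFinset v ∩ S) : ℝ) - F.degree v) ≤
      6 * d * #S / Fintype.card V * #(regularExtensions d S H F) := by
  have hVpos : (0 : ℝ) < Fintype.card V := by exact_mod_cast Fintype.card_pos_iff.2 ⟨v⟩
  have hcount : (∑ G ∈ regularExtensions d S H F, #(unexposedNeighbors G F S v)) *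
      Fintype.card V ≤ 6 * d * #S * #(regularExtensions d S H F) := by
    have hsmall := Nat.mul_le_mul_left
      (∑ G ∈ regularExtensions d S H F, #(unexposedNeighbors G F S v)) hcard
    linarith [sum_card_unexposedNeighbors_mul_le (d := d) (H := H) hF hv]
  rw [← sum_congr rfl fun G hG ↦
      cast_card_unexposedNeighbors hF (mem_regularExtensions.1 hG).2.2 hv,
    div_mul_eq_mul_div, le_div_iff₀ hVpos]
  exact_mod_cast hcount

end Switching

/-- **Lemma 3.2.** Switching bound on the conditional expectation of the number of
unexposed neighbours of `v` in `S`. Stated in counting form: the sum of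
`d_{G,S}(v) - d_F(v)` over all simple `d`-regular graphs `G` on `n` vertices with
`G[S] = H` and `F ⊆ G` is at most `6 d |S| / n` times the number of such graphs. -/
theorem statement_6 (n d : ℕ) (hd : 3 ≤ d) (hdn : 4 * d ≤ n)
    (S : Finset (Fin n)) (hS : 6 * S.card ≤ n)
    (H : SimpleGraph (Fin n)) (hH : ∀ a b : Fin n, H.Adj a b → a ∈ S ∧ b ∈ S)
    (F : SimpleGraph (Fin n))
    (hF : ∀ a b : Fin n, F.Adj a b → (a ∈ S ∧ b ∉ S) ∨ (a ∉ S ∧ b ∈ S))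
    (hΔ : ∀ w : Fin n, (F ⊔ H).degree w ≤ d)
    (v : Fin n) (hv : v ∉ S) :
    ∑ G ∈ Finset.univ.filter (fun G : SimpleGraph (Fin n) =>
        (∀ w, G.degree w = d) ∧
        (∀ a b : Fin n, a ∈ S → b ∈ S → (G.Adj a b ↔ H.Adj a b)) ∧ F ≤ G),
      (((G.neighborFinset v ∩ S).card : ℝ) - (F.degree v : ℝ))
      ≤ 6 * (d : ℝ) * (S.card : ℝ) / (n : ℝ) *
        ((Finset.univ.filter (fun G : SimpleGraph (Fin n) =>
          (∀ w, G.degree w = d) ∧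
          (∀ a b : Fin n, a ∈ S → b ∈ S → (G.Adj a b ↔ H.Adj a b)) ∧
          F ≤ G)).card : ℝ) := by
  have hcover : F.IsVertexCover S := fun a b hab ↦ (hF a b hab).imp And.left And.right
  have hbound := statement_6_general d S H F hcover v hv (by rw [Fintype.card_fin]; omega)
  simp only [regularExtensions, Fintype.card_fin] at hbound
  -- On `Fin n`, instance search finds other decidability instances than on a general finite type.
  convert hbound
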